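/- Let (A,B) be an invertible Jones pair of n×n complex matrices with A symmetric, let d ∈ ℂ satisfy d² = n, and let V be the associated 4n×4n matrix. Then for all F ∈ N_A, all G, H ∈ N_{A,B} and K paired with H, the matrix M(F,G,H) belongs to the Nomura algebra N_V of the type-II matrix V; that is, for all r, s ∈ {1,…,4n}, the vector (Ve_r)∘(V^(-)e_s) is an eigenvector of M(F,G,H). -/

import Mathlib

open Matrix

variable {m : Type*} [Fintype m] [DecidableEq m]

/-- The Schur (entrywise) inverse `A^(-)` of a matrix: `(A^(-))_{ij} = (A_{ij})⁻¹`. -/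
noncomputable def sinv (A : Matrix m m ℂ) : Matrix m m ℂ := Matrix.of fun i j => (A i j)⁻¹

/-- A type-II matrix: a Schur invertible matrix `W` with `W * (W^(-))ᵀ = n • I`,
where `n` is the size of the matrix. -/
def IsTypeII (A : Matrix m m ℂ) : Prop :=
  (∀ i j, A i j ≠ 0) ∧ A * (sinv A)ᵀ = (Fintype.card m : ℂ) • (1 : Matrix m m ℂ)

/-- `v_{ij} = (A e_i) ∘ (B e_j)`: the entrywise product of column `i` of `A`
with column `j` of `B`. -/
def colProd (A B : Matrix m m ℂ) (i j : m) : m → ℂ := fun k => A k i * B k j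

/-- Membership in the Nomura algebra `N_{A,B}`: every `v_{ij}` is an eigenvector of `M`. -/
def InNomura (A B M : Matrix m m ℂ) : Prop :=
  ∀ i j, ∃ c : ℂ, M.mulVec (colProd A B i j) = c • colProd A B i j

/-- `S = Θ_{A,B}(M)`: the matrix of eigenvalues, i.e. `M v_{ij} = S_{ij} v_{ij}` for all `i,j`. -/
def IsTheta (A B M S : Matrix m m ℂ) : Prop :=
  ∀ i j, M.mulVec (colProd A B i j) = S i j • colProd A B i j

/-- `(A,B)` is a Jones pair: `A` invertible, `B` Schur invertible, and
`X_A Δ_B X_A = Δ_B X_A Δ_B` and `X_A Δ_{Bᵀ} X_A = Δ_{Bᵀ} X_A Δ_{Bᵀ}`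
as operators on matrices. -/
def IsJonesPair (A B : Matrix m m ℂ) : Prop :=
  IsUnit A ∧ (∀ i j, B i j ≠ 0) ∧
  (∀ M : Matrix m m ℂ, A * (B ⊙ (A * M)) = B ⊙ (A * (B ⊙ M))) ∧
  (∀ M : Matrix m m ℂ, A * (Bᵀ ⊙ (A * M)) = Bᵀ ⊙ (A * (Bᵀ ⊙ M)))

/-- An invertible Jones pair: a Jones pair in which moreover `A` is Schur
invertible and `B` is invertible. -/
def IsInvertibleJonesPair (A B : Matrix m m ℂ) : Prop :=
  IsJonesPair A B ∧ (∀ i j, A i j ≠ 0) ∧ IsUnit B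

/-- `W` is a spin model: for some `d` with `d² = n`, `(d⁻¹ W, W^(-))` is an
invertible Jones pair. -/
def IsSpinModel (W : Matrix m m ℂ) : Prop :=
  ∃ d : ℂ, d ^ 2 = (Fintype.card m : ℂ) ∧ IsInvertibleJonesPair (d⁻¹ • W) (sinv W)

/-- Given an invertible Jones pair `(A,B)` with `A` symmetric, `K` is paired with
`H ∈ N_{A,B}` if `Kᵀ ∈ N_{A,Bᵀ}` and `Θ_{A,B}(H) = (Θ_{A,Bᵀ}(Kᵀ))ᵀ`. -/
def Paired (A B H K : Matrix m m ℂ) : Prop :=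
  ∃ S : Matrix m m ℂ, IsTheta A B H S ∧ IsTheta A Bᵀ Kᵀ Sᵀ

/-- The `4n × 4n` matrix with `4 × 4` block structure
`[[P, Q, R, R], [Q, P, R, R], [S, S, T, U], [S, S, U, T]]`. -/
def blockMat {n : ℕ} (P Q R S T U : Matrix (Fin n) (Fin n) ℂ) :
    Matrix (Fin 4 × Fin n) (Fin 4 × Fin n) ℂ :=
  Matrix.of fun x y =>
    (![![P, Q, R, R], ![Q, P, R, R], ![S, S, T, U], ![S, S, U, T]] x.1 y.1) x.2 y.2

/-- Yamada's `4n × 4n` matrix `V` built from `A`, `B` and `d` with `d² = n`. -/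
noncomputable def Vmat {n : ℕ} (A B : Matrix (Fin n) (Fin n) ℂ) (d : ℂ) :
    Matrix (Fin 4 × Fin n) (Fin 4 × Fin n) ℂ :=
  blockMat (d • A) (-(d • A)) (sinv B) (sinv B)ᵀ (d • A) (-(d • A))

/-!
With `u = A e_i ∘ A⁻ e_j`, `w = (B⁻)ᵀ e_i ∘ Bᵀ e_j`, `w' = B⁻ e_i ∘ B e_j`, the vectors
`V e_r ∘ V⁻ e_s` are, up to signs, `(u, u, w, w)`, `(w', w', u, u)`, and combinations of
`(p, -p, 0, 0)` and `(0, 0, q, -q)` with `(p, q) = (A e_i ∘ B e_j, (B⁻)ᵀ e_i ∘ A⁻ e_j)` or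
`(B⁻ e_i ∘ A⁻ e_j, A e_i ∘ Bᵀ e_j)`. On the first two kinds `M(F, G, H)` acts only through `F` and
`G`, on the other two only through `H` and `K`.

The Jones pair relations say that `B` sends `w` to `u` and `u` to `w'`, each time with scalars
`n A_{ij}`. So conjugation by `B` and by `Bᵀ` moves the common eigenvector families of `N_A` onto
each other; this gives `Θ_{B⁻}(F) = B⁻¹ Θ_A(F) B` and `Θ_{A,B}(Gᵀ) = (Θ_{A,B}(G) B⁻¹)ᵀ B`, whence
also the symmetry of pairing: if `K` is paired with `H` for `(A, B)`, then `H` is paired with `K`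
for `(A, Bᵀ)`.
-/

section SchurInverse

variable {ι : Type*}

theorem sinv_sinv (A : Matrix ι ι ℂ) : sinv (sinv A) = A := by
  ext i j
  simp [sinv]

theorem sinv_smul (c : ℂ) (A : Matrix ι ι ℂ) : sinv (c • A) = c⁻¹ • sinv A := by
  ext i j
  exact mul_inv c (A i j)

theorem sinv_neg (A : Matrix ι ι ℂ) : sinv (-A) = -sinv A := by
  ext i j
  exact inv_neg

theorem sinv_transpose (A : Matrix ι ι ℂ) : sinv Aᵀ = (sinv A)ᵀ := rfl

theorem sinv_ne_zero {A : Matrix ι ι ℂ} (hA : ∀ i j, A i j ≠ 0) (i j : ι) : sinv A i j ≠ 0 :=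
  inv_ne_zero (hA i j)

theorem colProd_eq_col_mul_col (A B : Matrix ι ι ℂ) (i j : ι) :
    colProd A B i j = A.col i * B.col j := rfl

theorem colProd_comm (A B : Matrix ι ι ℂ) (i j : ι) : colProd A B i j = colProd B A j i :=
  funext fun _ => mul_comm _ _

theorem card_smul_apply_ne_zero [Fintype ι] {A : Matrix ι ι ℂ} (hA : ∀ i j, A i j ≠ 0)
    (i j : ι) : ((Fintype.card ι : ℂ) • A) i j ≠ 0 :=
  mul_ne_zero (Nat.cast_ne_zero.2 (Fintype.card_pos_iff.2 ⟨i⟩).ne') (hA i j)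

end SchurInverse

section MapsColProd

variable {ι : Type*} [Fintype ι]

/-- `M` sends each vector `(A e_i) ∘ (B e_j)` to `T_{ij}` times the vector `(C e_i) ∘ (D e_j)`.
`IsTheta A B M T` is the case `C = A`, `D = B`, to which it unfolds; allowing two different
families makes these relations closed under products and inverses of the matrices `M`. -/
def MapsColProd (A B C D M T : Matrix ι ι ℂ) : Prop :=
  ∀ i j, M *ᵥ colProd A B i j = T i j • colProd C D i j

namespace MapsColProd

variable {A B C D E F M N T U : Matrix ι ι ℂ}

theorem swap (h : MapsColProd A B C D M T) : MapsColProd B A D C M Tᵀ := fun i j => by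
  rw [colProd_comm, h, colProd_comm C D, transpose_apply]

theorem comp (hN : MapsColProd C D E F N U) (hM : MapsColProd A B C D M T) :
    MapsColProd A B E F (N * M) (T ⊙ U) := fun i j => by
  rw [← mulVec_mulVec, hM, mulVec_smul, hN, smul_smul, hadamard_apply]

theorem inv [DecidableEq ι] (h : MapsColProd A B C D M T) (hM : IsUnit M)
    (hT : ∀ i j, T i j ≠ 0) : MapsColProd C D A B M⁻¹ (sinv T) := fun i j => by
  have hinv : M⁻¹ * M = 1 := nonsing_inv_mul M ((isUnit_iff_isUnit_det M).1 hM)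
  rw [← one_mulVec (colProd A B i j), ← hinv, ← mulVec_mulVec, h, mulVec_smul, smul_smul, sinv,
    of_apply, inv_mul_cancel₀ (hT i j), one_smul]

theorem conj [DecidableEq ι] (hM : MapsColProd A B C D M T) (hU : IsUnit M)
    (hT : ∀ i j, T i j ≠ 0) {P S : Matrix ι ι ℂ} (hP : IsTheta C D P S) :
    IsTheta A B (M⁻¹ * P * M) S := by
  have h := ((hM.inv hU hT).comp hP).comp hM
  have hS : T ⊙ (S ⊙ sinv T) = S := by
    ext i j
    simp [sinv, mul_left_comm (T i j), hT i j]
  rwa [hS] at h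

theorem eigenvalues_unique (hC : ∀ i j, C i j ≠ 0) (hD : ∀ i j, D i j ≠ 0)
    (hT : MapsColProd A B C D M T) (hU : MapsColProd A B C D M U) : T = U := by
  ext i j
  have h := congrFun ((hT i j).symm.trans (hU i j)) i
  exact mul_right_cancel₀ (mul_ne_zero (hC i i) (hD i j)) h

end MapsColProd

end MapsColProd

namespace IsTypeII

variable {ι : Type*} [Fintype ι] [DecidableEq ι] {A : Matrix ι ι ℂ}

theorem transpose_sinv_mul (hA : IsTypeII A) :
    (sinv A)ᵀ * A = (Fintype.card ι : ℂ) • (1 : Matrix ι ι ℂ) := by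
  cases isEmpty_or_nonempty ι
  · exact Subsingleton.elim _ _
  have hcard : (Fintype.card ι : ℂ) ≠ 0 := Nat.cast_ne_zero.2 Fintype.card_ne_zero
  have hright : A * ((Fintype.card ι : ℂ)⁻¹ • (sinv A)ᵀ) = 1 := by
    rw [Matrix.mul_smul, hA.2, inv_smul_smul₀ hcard]
  rw [← mul_eq_one_comm.1 hright, Matrix.smul_mul, smul_inv_smul₀ hcard]

protected theorem sinv (hA : IsTypeII A) : IsTypeII (sinv A) := by
  refine ⟨sinv_ne_zero hA.1, ?_⟩
  rw [sinv_sinv, ← transpose_transpose (sinv A), ← transpose_mul, hA.2, transpose_smul,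
    transpose_one]

protected theorem transpose (hA : IsTypeII A) : IsTypeII Aᵀ := by
  refine ⟨fun i j => hA.1 j i, ?_⟩
  rw [sinv_transpose, ← transpose_mul, hA.transpose_sinv_mul, transpose_smul, transpose_one]

theorem transpose_mulVec_eq_iff (hA : IsTypeII A) {x y : ι → ℂ} :
    Aᵀ *ᵥ x = y ↔ (Fintype.card ι : ℂ) • x = sinv A *ᵥ y := by
  cases isEmpty_or_nonempty ι
  · exact iff_of_true (Subsingleton.elim _ _) (Subsingleton.elim _ _)
  have hcard : (Fintype.card ι : ℂ) ≠ 0 := Nat.cast_ne_zero.2 Fintype.card_ne_zero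
  have hl : sinv A * Aᵀ = (Fintype.card ι : ℂ) • (1 : Matrix ι ι ℂ) := by
    simpa only [sinv_sinv] using hA.sinv.2
  have hr : Aᵀ * sinv A = (Fintype.card ι : ℂ) • (1 : Matrix ι ι ℂ) := by
    simpa only [sinv_sinv] using hA.sinv.transpose_sinv_mul
  constructor
  · rintro rfl
    rw [mulVec_mulVec, hl, smul_mulVec, one_mulVec]
  · intro h
    refine smul_right_injective _ hcard ?_
    simp only
    rw [← mulVec_smul, h, mulVec_mulVec, hr, smul_mulVec, one_mulVec]

end IsTypeII

namespace MapsColProd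

variable {ι : Type*} [Fintype ι] [DecidableEq ι] {A B C D M N T : Matrix ι ι ℂ}

-- In coordinates the left-hand side says `∑ k, M a k * A k i * B k j = T i j * C a i * D a j`;
-- for fixed `a` and `i` this is a linear system over `j` with matrix `Bᵀ`, and solving it for
-- the unknowns `M a k * A k i` gives the right-hand side.
theorem exchange_iff (hB : IsTypeII B) (hC : ∀ i j, C i j ≠ 0) :
    MapsColProd A B C D M T ↔
      MapsColProd (sinv B)ᵀ Dᵀ Aᵀ (sinv C)ᵀ T ((Fintype.card ι : ℂ) • Mᵀ) := by
  have hsolve : ∀ a i, (∀ j, (M *ᵥ colProd A B i j) a = (T i j • colProd C D i j) a) ↔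
      ∀ c, (T *ᵥ colProd (sinv B)ᵀ Dᵀ c a) i =
        (((Fintype.card ι : ℂ) • Mᵀ) c a • colProd Aᵀ (sinv C)ᵀ c a) i := by
    intro a i
    have h := hB.transpose_mulVec_eq_iff (x := fun k => M a k * A k i)
      (y := fun j => T i j * (C a i * D a j))
    simp only [funext_iff] at h
    refine Iff.trans (forall_congr' fun j => ?_) (h.trans (forall_congr' fun c => ?_))
    · simp only [mulVec, dotProduct, colProd, transpose_apply, Pi.smul_apply, smul_eq_mul]
      exact iff_of_eq (congrArg₂ _ (Finset.sum_congr rfl fun k _ => by ring) rfl)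
    · have hsum : (sinv B *ᵥ fun j => T i j * (C a i * D a j)) c =
          C a i * (T *ᵥ colProd (sinv B)ᵀ Dᵀ c a) i := by
        simp only [mulVec, dotProduct, colProd, transpose_apply, Finset.mul_sum]
        exact Finset.sum_congr rfl fun k _ => by ring
      have hCai := hC a i
      rw [hsum, ← mul_right_inj' hCai (b := (T *ᵥ _) i)]
      simp only [colProd, sinv, Pi.smul_apply, Matrix.smul_apply, transpose_apply, of_apply,
        smul_eq_mul]
      field_simp
      exact eq_comm
  simp only [MapsColProd, funext_iff]
  exact ⟨fun h c a i => (hsolve a i).1 (fun j => h i j a) c,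
    fun h i j a => (hsolve a i).2 (fun c => h c a i) j⟩

protected theorem transpose (h : MapsColProd A B C D M T) (hA : ∀ i j, A i j ≠ 0) (hB : IsTypeII B)
    (hC : ∀ i j, C i j ≠ 0) (hD : IsTypeII D) :
    MapsColProd (sinv C) (sinv D) (sinv A) (sinv B) Mᵀ T := by
  have hM := ((exchange_iff hB hC).1 h)
  have hT := ((exchange_iff hD.transpose fun i j => hA j i).1 hM).swap
  intro i j
  have hcard : (Fintype.card ι : ℂ) ≠ 0 := Nat.cast_ne_zero.2 (Fintype.card_pos_iff.2 ⟨i⟩).ne'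
  have hij := hT i j
  simp only [sinv_transpose, transpose_transpose, transpose_smul, smul_mulVec, Matrix.smul_apply,
    smul_assoc] at hij
  exact smul_right_injective _ hcard hij

theorem matrix_unique (hA : ∀ i j, A i j ≠ 0) (hB : IsTypeII B) (hC : ∀ i j, C i j ≠ 0)
    (hM : MapsColProd A B C D M T) (hN : MapsColProd A B C D N T) : M = N := by
  have h := eigenvalues_unique (fun i j => hA j i) (fun i j => sinv_ne_zero hC j i)
    ((exchange_iff hB hC).1 hM) ((exchange_iff hB hC).1 hN)
  ext i j
  have hcard : (Fintype.card ι : ℂ) ≠ 0 := Nat.cast_ne_zero.2 (Fintype.card_pos_iff.2 ⟨i⟩).ne'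
  exact smul_right_injective _ hcard (congrFun₂ h j i)

end MapsColProd

theorem IsTheta.swap {ι : Type*} [Fintype ι] {A B M S : Matrix ι ι ℂ} (h : IsTheta A B M S) :
    IsTheta B A M Sᵀ :=
  MapsColProd.swap h

theorem IsTheta.transpose {ι : Type*} [Fintype ι] [DecidableEq ι] {A B M S : Matrix ι ι ℂ}
    (h : IsTheta A B M S) (hA : ∀ i j, A i j ≠ 0) (hB : IsTypeII B) :
    IsTheta (sinv A) (sinv B) Mᵀ S :=
  MapsColProd.transpose h hA hB hA hB

namespace IsTypeII

variable {ι : Type*} [Fintype ι] [DecidableEq ι] {A B F G S : Matrix ι ι ℂ}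

theorem isTheta_theta (hA : IsTypeII A) (hF : IsTheta A (sinv A) F S) :
    IsTheta Aᵀ (sinv A)ᵀ S ((Fintype.card ι : ℂ) • Fᵀ) := by
  have h := (MapsColProd.exchange_iff hA.sinv hA.1).1 hF
  rwa [sinv_sinv] at h

theorem isTheta_theta_of_isSymm (hA : IsTypeII A) (hAs : A.IsSymm)
    (hF : IsTheta A (sinv A) F S) : IsTheta A (sinv A) S ((Fintype.card ι : ℂ) • Fᵀ) := by
  have hS := hA.isTheta_theta hF
  rwa [← sinv_transpose, hAs.eq] at hS

theorem isTheta_iff_mapsColProd (hB : IsTypeII B) (hA : ∀ i j, A i j ≠ 0) (hAs : A.IsSymm) :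
    IsTheta A B G S ↔
      MapsColProd (sinv B)ᵀ Bᵀ A (sinv A) S ((Fintype.card ι : ℂ) • Gᵀ) := by
  have h := MapsColProd.exchange_iff (A := A) (D := B) (M := G) (T := S) hB hA
  rwa [← sinv_transpose A, hAs.eq] at h

theorem mapsColProd_theta_transpose (hA : IsTypeII A) (hAs : A.IsSymm) (hB : ∀ i j, B i j ≠ 0)
    (hG : IsTheta A B G S) :
    MapsColProd A (sinv A) (sinv B)ᵀ Bᵀ Sᵀ ((Fintype.card ι : ℂ) • G) := by
  have h := ((MapsColProd.exchange_iff hA hB).1 hG.swap).swap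
  rwa [← sinv_transpose A, hAs.eq] at h

end IsTypeII

theorem Paired.exists_isTheta {ι : Type*} [Fintype ι] [DecidableEq ι] {A B H K : Matrix ι ι ℂ}
    (hHK : Paired A B H K) (hA : ∀ i j, A i j ≠ 0) (hB : IsTypeII B) :
    ∃ S, IsTheta A B H S ∧ IsTheta (sinv B)ᵀ (sinv A) K S := by
  obtain ⟨S, hH, hK⟩ := hHK
  refine ⟨S, hH, ?_⟩
  simpa only [transpose_transpose, sinv_transpose] using (hK.transpose hA hB.transpose).swap

section Invertible

variable {ι : Type*} [Fintype ι] [DecidableEq ι]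

theorem isTypeII_of_hadamard_inv_eq_vecMulVec {Y : Matrix ι ι ℂ} (hY : IsUnit Y) {f g : ι → ℂ}
    (h : Y ⊙ (Y⁻¹)ᵀ = vecMulVec f g) : IsTypeII Y := by
  have hdet := (isUnit_iff_isUnit_det Y).1 hY
  have hentry : ∀ a j, Y a j * Y⁻¹ j a = f a * g j := fun a j => congrFun₂ h a j
  have hrow : ∀ a, f a * ∑ j, g j = 1 := fun a => by
    simpa only [Finset.mul_sum, ← hentry, mul_apply, one_apply_eq] using
      congrFun₂ (mul_nonsing_inv Y hdet) a a
  have hcol : ∀ j, (∑ a, f a) * g j = 1 := fun j => by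
    simpa only [Finset.sum_mul, ← hentry, mul_apply, mul_comm (Y⁻¹ _ _), one_apply_eq] using
      congrFun₂ (nonsing_inv_mul Y hdet) j j
  have hf : ∀ a b, f a = f b := fun a b =>
    mul_right_cancel₀ (right_ne_zero_of_mul_eq_one (hrow a)) ((hrow a).trans (hrow b).symm)
  have hmul : ∀ a j, Y a j * ((Fintype.card ι : ℂ) * Y⁻¹ j a) = 1 := fun a j => by
    rw [mul_left_comm, hentry, ← hcol j, Finset.sum_congr rfl fun b _ => hf b a, Finset.sum_const,
      Finset.card_univ, nsmul_eq_mul, mul_assoc]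
  have hsinv : (sinv Y)ᵀ = (Fintype.card ι : ℂ) • Y⁻¹ := by
    ext j a
    exact inv_eq_of_mul_eq_one_right (hmul a j)
  refine ⟨fun a j => left_ne_zero_of_mul_eq_one (hmul a j), ?_⟩
  rw [hsinv, Matrix.mul_smul, mul_nonsing_inv Y hdet]

theorem IsTheta.mul_diagonal_mul {X Y M S : Matrix ι ι ℂ} (h : IsTheta X Y M S) (i : ι) :
    M * diagonal (X.col i) * Y = diagonal (X.col i) * Y * diagonal (S i) := by
  ext a j
  have hij := congrFun (h i j) a
  simp only [mulVec, dotProduct, colProd, Pi.smul_apply, smul_eq_mul] at hij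
  simp only [mul_apply (M := M * _), mul_diagonal, diagonal_mul, col_apply, mul_assoc, hij]
  ring

theorem IsTheta.hadamard_inv_mul_transpose {X Y M S : Matrix ι ι ℂ} (h : IsTheta X Y M S)
    (hX : ∀ i j, X i j ≠ 0) (hY : IsUnit Y) :
    (Y ⊙ (Y⁻¹)ᵀ) * Sᵀ = vecMulVec M.diag 1 := by
  ext a i
  refine mul_left_cancel₀ (hX a i) ?_
  calc X a i * ((Y ⊙ (Y⁻¹)ᵀ) * Sᵀ) a i
      = (diagonal (X.col i) * Y * diagonal (S i) * Y⁻¹) a a := by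
        simp only [mul_apply (N := Sᵀ), mul_apply (N := Y⁻¹), mul_diagonal, diagonal_mul,
          Finset.mul_sum, hadamard_apply, transpose_apply, col_apply]
        exact Finset.sum_congr rfl fun j _ => by ring
    _ = (M * diagonal (X.col i)) a a := by
        rw [← h.mul_diagonal_mul,
          mul_nonsing_inv_cancel_right _ _ ((isUnit_iff_isUnit_det Y).1 hY)]
    _ = X a i * vecMulVec M.diag 1 a i := by
        simp [mul_comm, vecMulVec_apply]

theorem IsTheta.isTypeII {X Y M S : Matrix ι ι ℂ} (h : IsTheta X Y M S)
    (hX : ∀ i j, X i j ≠ 0) (hY : IsUnit Y) (hS : IsUnit S) : IsTypeII Y := by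
  have hS' : IsUnit Sᵀ.det := (isUnit_iff_isUnit_det _).1 ((isUnit_transpose S).2 hS)
  refine isTypeII_of_hadamard_inv_eq_vecMulVec hY (f := M.diag) (g := 1 ᵥ* (Sᵀ)⁻¹) ?_
  rw [← vecMulVec_mul, ← h.hadamard_inv_mul_transpose hX hY, mul_nonsing_inv_cancel_right _ _ hS']

end Invertible

theorem IsJonesPair.isTheta {ι : Type*} [Fintype ι] [DecidableEq ι] {A B : Matrix ι ι ℂ}
    (h : IsJonesPair A B) : IsTheta A B A B := fun i j => by
  ext a
  have haj := congrFun₂ (h.2.2.1 (Matrix.single i j 1)) a j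
  simp only [mul_apply, hadamard_apply, single_apply, mul_ite, mul_one, mul_zero, and_true,
    Finset.sum_ite_eq, Finset.mem_univ, if_true] at haj
  simp only [mulVec, dotProduct, colProd, Pi.smul_apply, smul_eq_mul, mul_comm (A _ i), haj]
  ring

namespace IsInvertibleJonesPair

variable {ι : Type*} [Fintype ι] [DecidableEq ι] {A B F G H K S T : Matrix ι ι ℂ}

protected theorem transpose (h : IsInvertibleJonesPair A B) : IsInvertibleJonesPair A Bᵀ :=
  let ⟨⟨hA, hB, hAB, hABt⟩, hA', hB'⟩ := h
  ⟨⟨hA, fun i j => hB j i, hABt, hAB⟩, hA', (isUnit_transpose B).2 hB'⟩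

theorem isTypeII_left (h : IsInvertibleJonesPair A B) : IsTypeII A :=
  h.1.isTheta.swap.isTypeII h.1.2.1 h.1.1 ((isUnit_transpose B).2 h.2.2)

theorem isTypeII_right (h : IsInvertibleJonesPair A B) : IsTypeII B :=
  h.1.isTheta.isTypeII h.2.1 h.2.2 h.2.2

theorem mapsColProd_to_left (h : IsInvertibleJonesPair A B) (hA : A.IsSymm) :
    MapsColProd (sinv B)ᵀ Bᵀ A (sinv A) B ((Fintype.card ι : ℂ) • A) := by
  have hmap := (h.isTypeII_right.isTheta_iff_mapsColProd h.2.1 hA).1 h.1.isTheta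
  rwa [hA.eq] at hmap

theorem mapsColProd_from_left (h : IsInvertibleJonesPair A B) (hA : A.IsSymm) :
    MapsColProd A (sinv A) (sinv B) B B ((Fintype.card ι : ℂ) • A) :=
  h.isTypeII_left.mapsColProd_theta_transpose hA h.transpose.1.2.1 h.transpose.1.isTheta

theorem isTheta_sinv_right (h : IsInvertibleJonesPair A B) (hA : A.IsSymm)
    (hF : IsTheta A (sinv A) F S) : IsTheta (sinv B) B F (B⁻¹ * S * B) := by
  refine (MapsColProd.exchange_iff h.isTypeII_right (sinv_ne_zero h.1.2.1)).2 ?_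
  rw [sinv_sinv]
  exact (h.mapsColProd_to_left hA).conj h.2.2 (card_smul_apply_ne_zero h.2.1)
    (h.isTypeII_left.isTheta_theta_of_isSymm hA hF)

theorem isTheta_inv_mul_mul (h : IsInvertibleJonesPair A B) (hA : A.IsSymm)
    (hF : IsTheta A (sinv A) F S) : IsTheta A (sinv A) (B⁻¹ * F * B) (B⁻¹ * S * B) :=
  (h.mapsColProd_from_left hA).conj h.2.2 (card_smul_apply_ne_zero h.2.1)
    (h.isTheta_sinv_right hA hF)

theorem theta_sinv_right_eq_inv_mul_mul (h : IsInvertibleJonesPair A B) (hA : A.IsSymm)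
    (hF : IsTheta A (sinv A) F S) (hT : IsTheta (sinv B) B F T) : T = B⁻¹ * S * B :=
  MapsColProd.eigenvalues_unique (sinv_ne_zero h.1.2.1) h.1.2.1 hT (h.isTheta_sinv_right hA hF)

theorem isTheta_theta_mul_inv (h : IsInvertibleJonesPair A B) (hA : A.IsSymm)
    (hG : IsTheta A B G S) : IsTheta A (sinv A) (S * B⁻¹) (Gᵀ ⊙ sinv A) := by
  have hS := ((h.isTypeII_right.isTheta_iff_mapsColProd h.2.1 hA).1 hG).comp
    ((h.mapsColProd_to_left hA).inv h.2.2 (card_smul_apply_ne_zero h.2.1))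
  suffices heq : Gᵀ ⊙ sinv A =
      sinv ((Fintype.card ι : ℂ) • A) ⊙ ((Fintype.card ι : ℂ) • Gᵀ) by rwa [heq]
  ext i j
  have hcard : (Fintype.card ι : ℂ) ≠ 0 := Nat.cast_ne_zero.2 (Fintype.card_pos_iff.2 ⟨i⟩).ne'
  simp only [hadamard_apply, sinv, of_apply, Matrix.smul_apply, smul_eq_mul, transpose_apply]
  field_simp

theorem isTheta_transpose (h : IsInvertibleJonesPair A B) (hA : A.IsSymm)
    (hG : IsTheta A B G S) : IsTheta A B Gᵀ ((S * B⁻¹)ᵀ * B) := by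
  have hQ : IsTheta A (sinv A) (S * B⁻¹)ᵀ (Gᵀ ⊙ sinv A)ᵀ := by
    have hQ' := ((h.isTheta_theta_mul_inv hA hG).transpose h.2.1 h.isTypeII_left.sinv).swap
    rwa [sinv_sinv] at hQ'
  refine (h.isTypeII_right.isTheta_iff_mapsColProd h.2.1 hA).2 ?_
  have hS := MapsColProd.comp hQ (h.mapsColProd_to_left hA)
  suffices heq : (Fintype.card ι : ℂ) • (Gᵀ)ᵀ =
      ((Fintype.card ι : ℂ) • A) ⊙ (Gᵀ ⊙ sinv A)ᵀ by rwa [heq]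
  ext i j
  have hij := h.2.1 i j
  simp only [hadamard_apply, sinv, of_apply, Matrix.smul_apply, smul_eq_mul, transpose_apply,
    hA.apply i j]
  field_simp

theorem theta_transpose_eq (h : IsInvertibleJonesPair A B) (hA : A.IsSymm)
    (hS : IsTheta A B G S) (hT : IsTheta A B Gᵀ T) : T = (S * B⁻¹)ᵀ * B :=
  MapsColProd.eigenvalues_unique h.2.1 h.1.2.1 hT (h.isTheta_transpose hA hS)

theorem exists_mapsColProd_sinv_right (h : IsInvertibleJonesPair A B) (hA : A.IsSymm)
    (hS : IsTheta A B G S) (hT : IsTheta A B Gᵀ T) :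
    ∃ U, MapsColProd A (sinv A) (sinv B) B S U ∧ MapsColProd (sinv B) B A (sinv A) Tᵀ U := by
  have hdet := (isUnit_iff_isUnit_det B).1 h.2.2
  have hQ := h.isTheta_sinv_right hA (h.isTheta_theta_mul_inv hA hS)
  refine ⟨((Fintype.card ι : ℂ) • A) ⊙ (B⁻¹ * (Gᵀ ⊙ sinv A) * B), ?_, ?_⟩
  · rw [← nonsing_inv_mul_cancel_right B S hdet]
    exact MapsColProd.comp hQ (h.mapsColProd_from_left hA)
  · rw [h.theta_transpose_eq hA hS hT, transpose_mul, transpose_transpose, hadamard_comm]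
    exact (h.transpose.mapsColProd_to_left hA).comp hQ

theorem inv_mul_mul_eq_transpose_mul_mul_inv (h : IsInvertibleJonesPair A B) (hA : A.IsSymm)
    (hF : IsTheta A (sinv A) F S) : B⁻¹ * F * B = Bᵀ * F * (Bᵀ)⁻¹ := by
  have hBt : IsUnit Bᵀ := h.transpose.2.2
  have hinv := (h.transpose.mapsColProd_from_left hA).inv hBt (card_smul_apply_ne_zero h.2.1)
  have hr := hinv.conj ((isUnit_nonsing_inv_iff).2 hBt)
    (sinv_ne_zero (card_smul_apply_ne_zero h.2.1)) hF
  rw [nonsing_inv_nonsing_inv _ ((isUnit_iff_isUnit_det _).1 hBt)] at hr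
  exact MapsColProd.matrix_unique (sinv_ne_zero h.transpose.1.2.1) h.isTypeII_right.transpose
    (sinv_ne_zero h.transpose.1.2.1)
    ((h.mapsColProd_to_left hA).conj h.2.2 (card_smul_apply_ne_zero h.2.1) hF) hr

theorem paired_symm (h : IsInvertibleJonesPair A B) (hA : A.IsSymm) (hHK : Paired A B H K) :
    Paired A Bᵀ K H := by
  obtain ⟨S, hH, hK⟩ := hHK
  refine ⟨(Sᵀ * (Bᵀ)⁻¹)ᵀ * Bᵀ, ?_, ?_⟩
  · simpa only [transpose_transpose] using h.transpose.isTheta_transpose hA hK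
  · have hdet : IsUnit Bᵀ.det := (isUnit_iff_isUnit_det _).1 h.transpose.2.2
    have hS : B⁻¹ * S * Bᵀ = Bᵀ * (S * B⁻¹) := by
      have hconj := h.inv_mul_mul_eq_transpose_mul_mul_inv hA (h.isTheta_theta_mul_inv hA hH)
      rw [Matrix.mul_assoc, nonsing_inv_mul_cancel_right _ _
        ((isUnit_iff_isUnit_det B).1 h.2.2)] at hconj
      rw [hconj, nonsing_inv_mul_cancel_right _ _ hdet]
    have hSt : ((Sᵀ * (Bᵀ)⁻¹)ᵀ * Bᵀ)ᵀ = (S * B⁻¹)ᵀ * B := by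
      simpa only [transpose_mul, transpose_transpose, transpose_nonsing_inv, Matrix.mul_assoc]
        using congrArg transpose hS
    rw [hSt]
    exact h.isTheta_transpose hA hH

end IsInvertibleJonesPair

section Block

variable {n : ℕ}

/-- The vector on `Fin 4 × Fin n` with the four given blocks, matching the block structure of
`blockMat`. -/
def blockVec (p q r s : Fin n → ℂ) : Fin 4 × Fin n → ℂ := fun x => ![p, q, r, s] x.1 x.2

theorem smul_blockVec (c : ℂ) (p q r s : Fin n → ℂ) :
    c • blockVec p q r s = blockVec (c • p) (c • q) (c • r) (c • s) := by
  ext ⟨k, x⟩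
  fin_cases k <;> rfl

theorem blockVec_mul (p q r s p' q' r' s' : Fin n → ℂ) :
    blockVec p q r s * blockVec p' q' r' s' =
      blockVec (p * p') (q * q') (r * r') (s * s') := by
  ext ⟨k, x⟩
  fin_cases k <;> rfl

theorem blockMat_mulVec_blockVec (P Q R S T U : Matrix (Fin n) (Fin n) ℂ)
    (p q r s : Fin n → ℂ) :
    blockMat P Q R S T U *ᵥ blockVec p q r s =
      blockVec (P *ᵥ p + Q *ᵥ q + R *ᵥ r + R *ᵥ s) (Q *ᵥ p + P *ᵥ q + R *ᵥ r + R *ᵥ s)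
        (S *ᵥ p + S *ᵥ q + T *ᵥ r + U *ᵥ s) (S *ᵥ p + S *ᵥ q + U *ᵥ r + T *ᵥ s) := by
  ext ⟨k, x⟩
  have hsum : (blockMat P Q R S T U *ᵥ blockVec p q r s) (k, x) =
      ∑ y, blockMat P Q R S T U (k, x) (0, y) * p y +
        ∑ y, blockMat P Q R S T U (k, x) (1, y) * q y +
        ∑ y, blockMat P Q R S T U (k, x) (2, y) * r y +
        ∑ y, blockMat P Q R S T U (k, x) (3, y) * s y := by
    simp only [mulVec, dotProduct, Fintype.sum_prod_type, Fin.sum_univ_four]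
    rfl
  rw [hsum]
  fin_cases k <;> rfl

variable {P H Q R T K : Matrix (Fin n) (Fin n) ℂ} {p q : Fin n → ℂ} {α β a b : ℂ}

theorem blockMat_mulVec_symm (hP : P *ᵥ p = α • p) (hQ : Q *ᵥ q = β • p) (hR : R *ᵥ p = β • q)
    (hT : T *ᵥ q = α • q) (ha : a ^ 2 = 1) (hb : b ^ 2 = 1) :
    blockMat (P + H) (P - H) Q R (T + K) (T - K) *ᵥ blockVec (a • p) (a • p) (b • q) (b • q) =
      (2 * (α + a * b * β)) • blockVec (a • p) (a • p) (b • q) (b • q) := by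
  rw [blockMat_mulVec_blockVec, smul_blockVec]
  simp only [add_mulVec, sub_mulVec, mulVec_smul, hP, hQ, hR, hT]
  congr 1 <;> ext x <;> simp only [Pi.add_apply, Pi.sub_apply, Pi.smul_apply, smul_eq_mul]
  · linear_combination -2 * b * β * p x * ha
  · linear_combination -2 * b * β * p x * ha
  · linear_combination -2 * a * β * q x * hb
  · linear_combination -2 * a * β * q x * hb

theorem blockMat_mulVec_antisymm (hH : H *ᵥ p = α • p) (hK : K *ᵥ q = α • q) :
    blockMat (P + H) (P - H) Q R (T + K) (T - K) *ᵥ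
        blockVec (a • p) (-(a • p)) (b • q) (-(b • q)) =
      (2 * α) • blockVec (a • p) (-(a • p)) (b • q) (-(b • q)) := by
  rw [blockMat_mulVec_blockVec, smul_blockVec]
  simp only [add_mulVec, sub_mulVec, mulVec_neg, mulVec_smul, hH, hK]
  congr 1 <;> module

theorem sinv_blockMat (P Q R S T U : Matrix (Fin n) (Fin n) ℂ) :
    sinv (blockMat P Q R S T U) =
      blockMat (sinv P) (sinv Q) (sinv R) (sinv S) (sinv T) (sinv U) := by
  ext ⟨k, x⟩ ⟨l, y⟩
  fin_cases k <;> fin_cases l <;> rfl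

theorem sinv_Vmat (A B : Matrix (Fin n) (Fin n) ℂ) (d : ℂ) :
    sinv (Vmat A B d) = Vmat (sinv A) (sinv B) d⁻¹ := by
  simp only [Vmat, sinv_blockMat, sinv_neg, sinv_smul, sinv_transpose]

theorem exists_Vmat_col (A B : Matrix (Fin n) (Fin n) ℂ) (d : ℂ) (k : Fin 4) (i : Fin n) :
    ∃ ε : ℂ, ε ^ 2 = 1 ∧
      ((Vmat A B d).col (k, i) =
          blockVec ((ε * d) • A.col i) (-((ε * d) • A.col i))
            ((sinv B)ᵀ.col i) ((sinv B)ᵀ.col i) ∨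
        (Vmat A B d).col (k, i) =
          blockVec ((sinv B).col i) ((sinv B).col i)
            ((ε * d) • A.col i) (-((ε * d) • A.col i))) := by
  fin_cases k
  · refine ⟨1, one_pow 2, .inl ?_⟩
    rw [one_mul]
    ext ⟨l, x⟩
    fin_cases l <;> rfl
  · refine ⟨-1, neg_one_sq, .inl ?_⟩
    rw [neg_one_mul, neg_smul, neg_neg]
    ext ⟨l, x⟩
    fin_cases l <;> rfl
  · refine ⟨1, one_pow 2, .inr ?_⟩
    rw [one_mul]
    ext ⟨l, x⟩
    fin_cases l <;> rfl
  · refine ⟨-1, neg_one_sq, .inr ?_⟩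
    rw [neg_one_mul, neg_smul, neg_neg]
    ext ⟨l, x⟩
    fin_cases l <;> rfl

theorem inNomura_Vmat_blockMat {A B P Q R T H K α β α' β' γ γ' : Matrix (Fin n) (Fin n) ℂ} {d : ℂ}
    (hd : d ≠ 0)
    (hP : IsTheta A (sinv A) P α) (hQ : MapsColProd (sinv B)ᵀ Bᵀ A (sinv A) Q β)
    (hR : MapsColProd A (sinv A) (sinv B)ᵀ Bᵀ R β) (hT : IsTheta (sinv B)ᵀ Bᵀ T α)
    (hP' : IsTheta (sinv B) B P α') (hQ' : MapsColProd A (sinv A) (sinv B) B Q β')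
    (hR' : MapsColProd (sinv B) B A (sinv A) R β') (hT' : IsTheta A (sinv A) T α')
    (hH : IsTheta A B H γ) (hK : IsTheta (sinv B)ᵀ (sinv A) K γ)
    (hH' : IsTheta (sinv B) (sinv A) H γ') (hK' : IsTheta A Bᵀ K γ') :
    InNomura (Vmat A B d) (sinv (Vmat A B d))
      (blockMat (P + H) (P - H) Q R (T + K) (T - K)) := by
  rintro ⟨k, i⟩ ⟨l, j⟩
  obtain ⟨ε, hε, hi⟩ := exists_Vmat_col A B d k i
  obtain ⟨δ, hδ, hj⟩ := exists_Vmat_col (sinv A) (sinv B) d⁻¹ l j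
  have hεδ : (ε * δ) ^ 2 = 1 := by rw [mul_pow, hε, hδ, one_mul]
  have hmul (x y : Fin n → ℂ) : ((ε * d) • x) * ((δ * d⁻¹) • y) = (ε * δ) • (x * y) := by
    rw [smul_mul_smul_comm, mul_mul_mul_comm, mul_inv_cancel₀ hd, mul_one]
  rw [sinv_sinv] at hj
  rw [sinv_Vmat, colProd_eq_col_mul_col]
  rcases hi with hi | hi <;> rcases hj with hj | hj <;> rw [hi, hj, blockVec_mul]
  · rw [neg_mul_neg, hmul]
    have h := blockMat_mulVec_symm (H := H) (K := K) (hP i j) (hQ i j) (hR i j) (hT i j)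
      hεδ (one_pow 2)
    rw [one_smul] at h
    exact ⟨_, h⟩
  · rw [neg_mul, mul_neg, smul_mul_assoc, mul_smul_comm]
    exact ⟨_, blockMat_mulVec_antisymm (hH i j) (hK i j)⟩
  · rw [neg_mul, mul_neg, smul_mul_assoc, mul_smul_comm]
    exact ⟨_, blockMat_mulVec_antisymm (hH' i j) (hK' i j)⟩
  · rw [neg_mul_neg, hmul]
    have h := blockMat_mulVec_symm (H := H) (K := K) (hP' i j) (hQ' i j) (hR' i j) (hT' i j)
      (one_pow 2) hεδ
    rw [one_smul] at h
    exact ⟨_, h⟩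

end Block

theorem blockMat_mem_nomura_V_general {n : ℕ} (A B : Matrix (Fin n) (Fin n) ℂ)
    (h : IsInvertibleJonesPair A B) (hAs : Aᵀ = A) (d : ℂ) (hd : d ≠ 0)
    (F G H K SF TF SG SGt : Matrix (Fin n) (Fin n) ℂ)
    (hSF : IsTheta A (sinv A) F SF)
    (hTF : IsTheta (sinv B) (sinv (sinv B)) F TF)
    (hSG : IsTheta A B G SG) (hSGt : IsTheta A B Gᵀ SGt)
    (hHK : Paired A B H K) :
    InNomura (Vmat A B d) (sinv (Vmat A B d))
      (blockMat (SF + H) (SF - H) SG SGtᵀ (TF + K) (TF - K)) := by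
  have hT := h.isTypeII_right.sinv.isTheta_theta hTF
  rw [sinv_sinv] at hT hTF
  have hP := h.isTypeII_left.isTheta_theta_of_isSymm hAs hSF
  have hT' : IsTheta A (sinv A) TF _ :=
    h.theta_sinv_right_eq_inv_mul_mul hAs hSF hTF ▸ h.isTheta_inv_mul_mul hAs hP
  obtain ⟨S, hH, hK⟩ := hHK.exists_isTheta h.2.1 h.isTypeII_right
  obtain ⟨S', hK', hH'⟩ := (h.paired_symm hAs hHK).exists_isTheta h.2.1 h.isTypeII_right.transpose
  obtain ⟨U, hQ', hR'⟩ := h.exists_mapsColProd_sinv_right hAs hSG hSGt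
  exact inNomura_Vmat_blockMat hd hP ((h.isTypeII_right.isTheta_iff_mapsColProd h.2.1 hAs).1 hSG)
    (h.isTypeII_left.mapsColProd_theta_transpose hAs h.1.2.1 hSGt) hT (h.isTheta_sinv_right hAs hP)
    hQ' hR' hT' hH hK hH' hK'

theorem blockMat_mem_nomura_V {n : ℕ} (hn : 0 < n) (A B : Matrix (Fin n) (Fin n) ℂ)
    (h : IsInvertibleJonesPair A B) (hAs : Aᵀ = A)
    (d : ℂ) (hd : d ^ 2 = (n : ℂ))
    (F G H K SF TF SG SGt : Matrix (Fin n) (Fin n) ℂ)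
    (hSF : IsTheta A (sinv A) F SF)
    (hTF : IsTheta (sinv B) (sinv (sinv B)) F TF)
    (hSG : IsTheta A B G SG) (hSGt : IsTheta A B Gᵀ SGt)
    (hHK : Paired A B H K) :
    InNomura (Vmat A B d) (sinv (Vmat A B d))
      (blockMat (SF + H) (SF - H) SG SGtᵀ (TF + K) (TF - K)) := by
  have hd0 : d ≠ 0 := pow_ne_zero_iff two_ne_zero |>.1 (hd ▸ Nat.cast_ne_zero.2 hn.ne')
  exact blockMat_mem_nomura_V_general A B h hAs d hd0 F G H K SF TF SG SGt hSF hTF hSG hSGt hHK
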